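/- MSO model-checking of effect trees generated by closed HEPCF computations is undecidable: there is no algorithm that, given a closed HEPCF computation C and an MSO formula (or APT) φ, decides whether ET(C) ⊨ φ. -/

import Mathlib

/-! HEPCF: EPCF extended with effect handlers. A handler consists of a return
clause `Cr` (binding the returned value, de Bruijn index 0) and, for each
operation `σ`, a clause `Hop σ` binding the parameter `x` (index 1) and the
continuation `r` (index 0). -/

namespace HEPCF

mutual
/-- HEPCF values (de Bruijn representation). -/
inductive HVal (CV Op : Type) : Type
  | cv : CV → HVal CV Op
  | num : ℕ → ℕ → HVal CV Op
  | var : ℕ → HVal CV Op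
  | lam : HComp CV Op → HVal CV Op
  | fixv : HVal CV Op → HVal CV Op
/-- HEPCF computations (de Bruijn representation). -/
inductive HComp (CV Op : Type) : Type
  | app : HVal CV Op → HVal CV Op → HComp CV Op
  | ret : HVal CV Op → HComp CV Op
  | letin : HComp CV Op → HComp CV Op → HComp CV Op
  | opc : Op → HVal CV Op → HComp CV Op → HComp CV Op
  | case : (k : ℕ) → HVal CV Op → (Fin k → HComp CV Op) → HComp CV Op
  | handle : HComp CV Op → (Op → HComp CV Op) → HComp CV Op → HComp CV Op
end

variable {CV Op : Type}

/-- Lifting of a renaming under a binder. -/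
def upr (ρ : ℕ → ℕ) : ℕ → ℕ
  | 0 => 0
  | n + 1 => ρ n + 1

mutual
/-- Renaming of variables in values. -/
def renV (ρ : ℕ → ℕ) : HVal CV Op → HVal CV Op
  | .cv v => .cv v
  | .num n k => .num n k
  | .var n => .var (ρ n)
  | .lam C => .lam (renC (upr ρ) C)
  | .fixv V => .fixv (renV (upr ρ) V)
/-- Renaming of variables in computations. -/
def renC (ρ : ℕ → ℕ) : HComp CV Op → HComp CV Op
  | .app V W => .app (renV ρ V) (renV ρ W)
  | .ret V => .ret (renV ρ V)
  | .letin C B => .letin (renC ρ C) (renC (upr ρ) B)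
  | .opc σ V C => .opc σ (renV ρ V) (renC (upr ρ) C)
  | .case k V Cs => .case k (renV ρ V) (fun i => renC ρ (Cs i))
  | .handle Cr Hop C =>
      .handle (renC (upr ρ) Cr) (fun σ => renC (upr (upr ρ)) (Hop σ)) (renC ρ C)
end

/-- Lifting of a substitution under a binder. -/
def upsH (σ : ℕ → HVal CV Op) : ℕ → HVal CV Op
  | 0 => .var 0
  | n + 1 => renV Nat.succ (σ n)

mutual
/-- Simultaneous substitution of values for variables, in values. -/
def subV (σ : ℕ → HVal CV Op) : HVal CV Op → HVal CV Op
  | .cv v => .cv v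
  | .num n k => .num n k
  | .var n => σ n
  | .lam C => .lam (subC (upsH σ) C)
  | .fixv V => .fixv (subV (upsH σ) V)
/-- Simultaneous substitution of values for variables, in computations. -/
def subC (σ : ℕ → HVal CV Op) : HComp CV Op → HComp CV Op
  | .app V W => .app (subV σ V) (subV σ W)
  | .ret V => .ret (subV σ V)
  | .letin C B => .letin (subC σ C) (subC (upsH σ) B)
  | .opc op V C => .opc op (subV σ V) (subC (upsH σ) C)
  | .case k V Cs => .case k (subV σ V) (fun i => subC σ (Cs i))
  | .handle Cr Hop C =>
      .handle (subC (upsH σ) Cr) (fun op => subC (upsH (upsH σ)) (Hop op))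
        (subC σ C)
end

/-- Substitution `C[W/x]` of the value `W` for the variable `0`. -/
def subst0C (W : HVal CV Op) (C : HComp CV Op) : HComp CV Op :=
  subC (fun n => match n with | 0 => W | n + 1 => .var n) C

/-- Substitution `V[W/x]` of the value `W` for the variable `0`. -/
def subst0V (W : HVal CV Op) (V : HVal CV Op) : HVal CV Op :=
  subV (fun n => match n with | 0 => W | n + 1 => .var n) V

/-- The simultaneous substitution `[r := A, x := B]` used when a handler
catches an operation (`r` is the innermost bound variable). -/
def sub2 (A B : HVal CV Op) : ℕ → HVal CV Op
  | 0 => A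
  | 1 => B
  | n + 2 => .var n

/-- The value `λy. handle H C` passed as the captured continuation when the
handler `H = (Cr, Hop)` catches an operation with continuation `C`. -/
def contVal (Cr : HComp CV Op) (Hop : Op → HComp CV Op) (C : HComp CV Op) :
    HVal CV Op :=
  .lam (.handle (renC (upr Nat.succ) Cr)
    (fun σ => renC (upr (upr Nat.succ)) (Hop σ)) C)

/-- The reduction relation of HEPCF. -/
inductive HStep : HComp CV Op → HComp CV Op → Prop
  | beta (C : HComp CV Op) (W : HVal CV Op) :
      HStep (.app (.lam C) W) (subst0C W C)
  | fix (V W : HVal CV Op) :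
      HStep (.app (.fixv V) W) (.app (subst0V (.fixv V) V) W)
  | case {n k : ℕ} (h : n < k) (Cs : Fin k → HComp CV Op) :
      HStep (.case k (.num n k) Cs) (Cs ⟨n, h⟩)
  | letRet (V : HVal CV Op) (C : HComp CV Op) :
      HStep (.letin (.ret V) C) (subst0C V C)
  | letCong {C C' : HComp CV Op} (B : HComp CV Op) :
      HStep C C' → HStep (.letin C B) (.letin C' B)
  | letOp (σ : Op) (V : HVal CV Op) (C D : HComp CV Op) :
      HStep (.letin (.opc σ V C) D) (.opc σ V (.letin C (renC (upr Nat.succ) D)))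
  | hCong {C C' : HComp CV Op} (Cr : HComp CV Op) (Hop : Op → HComp CV Op) :
      HStep C C' → HStep (.handle Cr Hop C) (.handle Cr Hop C')
  | hRet (Cr : HComp CV Op) (Hop : Op → HComp CV Op) (V : HVal CV Op) :
      HStep (.handle Cr Hop (.ret V)) (subst0C V Cr)
  | hOp (Cr : HComp CV Op) (Hop : Op → HComp CV Op) (σ : Op)
      (V : HVal CV Op) (C : HComp CV Op) :
      HStep (.handle Cr Hop (.opc σ V C))
        (subC (sub2 (contVal Cr Hop C) V) (Hop σ))

end HEPCF

namespace HEPCF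

/-- HEPCF types: base types, enumeration types, and effect-annotated arrows
`T →_E U` where `E` is a set of operations. -/
inductive HTy (BV Op : Type) : Type
  | base : BV → HTy BV Op
  | enum : ℕ → HTy BV Op
  | arr : HTy BV Op → Set Op → HTy BV Op → HTy BV Op

section Typing

variable {BV CV Op : Type} (cvTy : CV → BV) (opPar : Op → BV) (opAr : Op → ℕ)

mutual
/-- Typing judgment for HEPCF values. -/
inductive HVTy : List (HTy BV Op) → HVal CV Op → HTy BV Op → Prop
  | cv {Γ} (v : CV) : HVTy Γ (.cv v) (.base (cvTy v))
  | num {Γ n k} : n < k → HVTy Γ (.num n k) (.enum k)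
  | var {Γ n T} : Γ[n]? = some T → HVTy Γ (.var n) T
  | lam {Γ C T E U} : HCTy (T :: Γ) E C U → HVTy Γ (.lam C) (.arr T E U)
  | fixv {Γ V T E U} : HVTy ((HTy.arr T E U) :: Γ) V (.arr T E U) →
      HVTy Γ (.fixv V) (.arr T E U)
/-- Typing judgment `Γ ⊢_E C : T` for HEPCF computations. The rule for
`handle` types the return clause and the clauses for the handled operations
`E'` (the clause for `σᵢ` binds the parameter `x : Bᵢ` and the continuation
`r : kᵢ →_E T`). -/
inductive HCTy : List (HTy BV Op) → Set Op → HComp CV Op → HTy BV Op → Prop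
  | app {Γ E V W T U} : HVTy Γ V (.arr T E U) → HVTy Γ W T →
      HCTy Γ E (.app V W) U
  | ret {Γ E V T} : HVTy Γ V T → HCTy Γ E (.ret V) T
  | letin {Γ E C B T U} : HCTy Γ E C T → HCTy (T :: Γ) E B U →
      HCTy Γ E (.letin C B) U
  | opc {Γ E σ V C T} : σ ∈ E → HVTy Γ V (.base (opPar σ)) →
      HCTy ((HTy.enum (opAr σ)) :: Γ) E C T → HCTy Γ E (.opc σ V C) T
  | case {Γ E k V T} {Cs : Fin k → HComp CV Op} : HVTy Γ V (.enum k) →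
      (∀ i, HCTy Γ E (Cs i) T) → HCTy Γ E (.case k V Cs) T
  | handle {Γ E C Cr Hop T U} {E' : Set Op} :
      HCTy Γ E' C U →
      HCTy (U :: Γ) E Cr T →
      (∀ σ ∈ E',
        HCTy ((HTy.arr (.enum (opAr σ)) E T) :: (HTy.base (opPar σ)) :: Γ)
          E (Hop σ) T) →
      HCTy Γ E (.handle Cr Hop C) T
end

end Typing

end HEPCF

namespace HEPCF

/-- Labels of effect trees of HEPCF computations: operation nodes, parameter
leaves (constant values), and return leaves. -/
inductive HLab (CV Op : Type) : Type
  | opl : Op → HLab CV Op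
  | cvl : CV → HLab CV Op
  | retl : HVal CV Op → HLab CV Op

variable {CV Op : Type}

/-- An HEPCF computation diverges when its reduction never terminates. -/
def HDiverges (C : HComp CV Op) : Prop :=
  ∀ D, Relation.ReflTransGen HStep C D → ∃ D', HStep D D'

/-- The effect tree `ET(C)` of an HEPCF computation, described position by
position: `ETAt opAr C p l` holds when `ET(C)` carries label `l` at
position `p` (`none` standing for `⊥`). An operation `σ : B ⇝ k` is a node
of arity `k+1` whose child `0` is a leaf carrying the parameter. -/
inductive ETAt (opAr : Op → ℕ) : HComp CV Op → List ℕ → Option (HLab CV Op) → Prop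
  | bot {C} : HDiverges C → ETAt opAr C [] none
  | retn {C V} : Relation.ReflTransGen HStep C (.ret V) →
      ETAt opAr C [] (some (.retl V))
  | opHead {C σ V C'} : Relation.ReflTransGen HStep C (.opc σ V C') →
      ETAt opAr C [] (some (.opl σ))
  | opParam {C σ v C'} :
      Relation.ReflTransGen HStep C (.opc σ (.cv v) C') →
      ETAt opAr C [0] (some (.cvl v))
  | opChild {C σ V C' i p l} :
      Relation.ReflTransGen HStep C (.opc σ V C') → i < opAr σ →
      ETAt opAr (subst0C (.num i (opAr σ)) C') p l →
      ETAt opAr C ((i + 1) :: p) l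

end HEPCF

/-! Alternating parity tree automata over (possibly infinite) ranked trees.
Trees over a signature `L` with arities `ar : L → ℕ` are represented by their
labelling function on positions (lists of child indices): `none` means the
position does not exist, `some none` is the unproductive tree `⊥`, and
`some (some l)` is a node labelled by the constructor `l`. -/

/-- Positive Boolean formulas over a set of variables `X`. -/
inductive PBF (X : Type) : Type
  | tt : PBF X
  | ff : PBF X
  | var : X → PBF X
  | and : PBF X → PBF X → PBF X
  | or : PBF X → PBF X → PBF X

/-- Satisfaction of a positive Boolean formula by a set `Y` of variables. -/
def PBF.Sat {X : Type} (Y : Set X) : PBF X → Prop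
  | .tt => True
  | .ff => False
  | .var x => x ∈ Y
  | .and φ ψ => PBF.Sat Y φ ∧ PBF.Sat Y ψ
  | .or φ ψ => PBF.Sat Y φ ∨ PBF.Sat Y ψ

/-- Trees over the signature `L`, as partial labelling functions on positions. -/
def TreeF (L : Type) : Type := List ℕ → Option (Option L)

/-- Well-formedness of a labelling function: the root exists, and a position
`p ++ [i]` exists iff `p` carries a constructor `l` with `i < ar l`
(`⊥`-nodes have no children). -/
def IsTree {L : Type} (ar : L → ℕ) (t : TreeF L) : Prop :=
  (t []).isSome ∧
    ∀ p i, (t (p ++ [i])).isSome ↔ ∃ l, t p = some (some l) ∧ i < ar l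

/-- An alternating parity tree automaton over the signature `L` with states
`Q`: transition function, initial state, and priority function. -/
structure APT (L Q : Type) : Type where
  δ : Q → L → PBF (ℕ × Q)
  qI : Q
  Ω : Q → ℕ

namespace APT

variable {L Q : Type}

/-- The current state of a node of a run-tree (the run-tree node is identified
by the list of moves `(child index, state)` leading to it from the root). -/
def stateOf (A : APT L Q) (r : List (ℕ × Q)) : Q :=
  (r.getLast?).elim A.qI Prod.snd

/-- `R` is a run-tree of the automaton `A` over the tree `t`: it contains the
root `(ε, qI)`, and every node `(α, q)` of `R` comes with a set `S` of
moves satisfying the transition formula `δ(q, t(α))`, all of whose elements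
are children of the node in `R`. -/
def IsRun (ar : L → ℕ) (t : TreeF L) (A : APT L Q)
    (R : Set (List (ℕ × Q))) : Prop :=
  [] ∈ R ∧
    ∀ r ∈ R, ∃ (f : L) (S : Set (ℕ × Q)),
      t (r.map Prod.fst) = some (some f) ∧
      (∀ x ∈ S, x.1 < ar f) ∧
      PBF.Sat S (A.δ (A.stateOf r) f) ∧
      ∀ x ∈ S, r ++ [x] ∈ R

/-- An infinite branch of a run-tree. -/
def IsBranch (R : Set (List (ℕ × Q))) (b : ℕ → ℕ × Q) : Prop :=
  ∀ n, (List.ofFn fun i : Fin n => b i) ∈ R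

/-- The parity condition along an infinite branch: the largest priority
occurring infinitely often is even. -/
def ParityOK (A : APT L Q) (b : ℕ → ℕ × Q) : Prop :=
  ∃ m, Even m ∧ {n | A.Ω (b n).2 = m}.Infinite ∧
    ∀ m' > m, {n | A.Ω (b n).2 = m'}.Finite

/-- Acceptance: there exists a run-tree all of whose infinite branches
satisfy the parity condition. -/
def Accepts (ar : L → ℕ) (A : APT L Q) (t : TreeF L) : Prop :=
  ∃ R, IsRun ar t A R ∧ ∀ b, IsBranch R b → ParityOK A b

end APT

/-! Undecidability of MSO (APT) model-checking for effect trees of HEPCF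
computations. We work over the concrete finitary signature with a single base
type `Unit`, a single constant value `()` and a single operation
`σ : Unit ⇝ 1` (`CV = BV = Op = Unit`), and explicitly encode programs and
automata (with finitely presented transition tables) as natural numbers. -/

namespace HEPCF

/-- Base-type assignment of the fixed signature. -/
def cvTyU : Unit → Unit := fun _ => ()

/-- Parameter types of the fixed signature. -/
def opParU : Unit → Unit := fun _ => ()

/-- Arities of the fixed signature: `σ : Unit ⇝ 1`. -/
def opArU : Unit → ℕ := fun _ => 1

/-- Arities of effect-tree labels: an operation node has its parameter leaf
as extra first child; parameter and return leaves have no children. -/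
def arH : HLab Unit Unit → ℕ
  | .opl _ => 2
  | .cvl _ => 0
  | .retl _ => 0

mutual
/-- An explicit numeric encoding of HEPCF values. -/
def encV : HVal Unit Unit → ℕ
  | .cv _ => Nat.pair 0 0
  | .num n k => Nat.pair 1 (Nat.pair n k)
  | .var n => Nat.pair 2 n
  | .lam C => Nat.pair 3 (encC C)
  | .fixv V => Nat.pair 4 (encV V)
/-- An explicit numeric encoding of HEPCF computations. -/
def encC : HComp Unit Unit → ℕ
  | .app V W => Nat.pair 5 (Nat.pair (encV V) (encV W))
  | .ret V => Nat.pair 6 (encV V)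
  | .letin C B => Nat.pair 7 (Nat.pair (encC C) (encC B))
  | .opc _ V C => Nat.pair 8 (Nat.pair (encV V) (encC C))
  | .case k V Cs =>
      Nat.pair 9 (Nat.pair k (Nat.pair (encV V)
        (Encodable.encode (List.ofFn fun i : Fin k => encC (Cs i)))))
  | .handle Cr Hop C =>
      Nat.pair 10 (Nat.pair (encC Cr) (Nat.pair (encC (Hop ())) (encC C)))
end

/-- Numeric encoding of effect-tree labels. -/
def encLab : HLab Unit Unit → ℕ
  | .opl _ => Nat.pair 0 0
  | .cvl _ => Nat.pair 1 0
  | .retl V => Nat.pair 2 (encV V)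

/-- Numeric encoding of positive Boolean formulas over `ℕ × ℕ`. -/
def encPBF : PBF (ℕ × ℕ) → ℕ
  | .tt => Nat.pair 0 0
  | .ff => Nat.pair 1 0
  | .var x => Nat.pair 2 (Nat.pair x.1 x.2)
  | .and φ ψ => Nat.pair 3 (Nat.pair (encPBF φ) (encPBF ψ))
  | .or φ ψ => Nat.pair 4 (Nat.pair (encPBF φ) (encPBF ψ))

/-- A finitely presented alternating parity tree automaton over effect-tree
labels: states are natural numbers, and the transition table and priority
function are given by finite association lists (keys of the transition table
are pairs `(state, label code)`). -/
structure APTCode : Type where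
  qI : ℕ
  δ : List ((ℕ × ℕ) × PBF (ℕ × ℕ))
  Ω : List (ℕ × ℕ)

/-- The APT denoted by a finitely presented automaton. -/
def APTCode.toAPT (A : APTCode) : APT (HLab Unit Unit) ℕ where
  δ q l := ((A.δ.lookup (q, encLab l)).getD .ff)
  qI := A.qI
  Ω q := (A.Ω.lookup q).getD 0

/-- Numeric encoding of finitely presented automata. -/
def encAPT (A : APTCode) : ℕ :=
  Nat.pair A.qI (Nat.pair
    (Encodable.encode (A.δ.map fun e =>
      Nat.pair (Nat.pair e.1.1 e.1.2) (encPBF e.2)))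
    (Encodable.encode (A.Ω.map fun e => Nat.pair e.1 e.2)))

/-- The effect tree of an HEPCF computation, as a labelling function on
positions (defined from the relation `ETAt`, using choice). -/
noncomputable def ETF (C : HComp Unit Unit) : TreeF (HLab Unit Unit) :=
  open scoped Classical in
  fun p => if h : ∃ l, ETAt opArU C p l then some h.choose else none

end HEPCF

/-!
HEPCF has no arithmetic primitives, but handlers recover it: a thunk performing the operation `n`
times is a numeral for `n`, a handler that discards the continuation tests it for zero, and a
handler that resumes the continuation computes its predecessor. Functions from numerals to numerals
then represent lists of natural numbers, so every partial recursive code compiles to a closed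
function, recursion providing the unbounded loops; its runs follow the abstract machine for codes,
whose continuations become nested `let` frames. Whether the compiled program returns `()` is
therefore undecidable, and a fixed automaton reads this off the root of the effect tree.
-/

namespace HEPCF

open Relation Turing.ToPartrec

/-! ### Substitution -/

section Substitution

variable {CV Op : Type}

theorem upr_comp (ρ' ρ : ℕ → ℕ) : upr (ρ' ∘ ρ) = upr ρ' ∘ upr ρ := by
  funext n; cases n <;> rfl

theorem upsH_comp_upr (s : ℕ → HVal CV Op) (ρ : ℕ → ℕ) : upsH (s ∘ ρ) = upsH s ∘ upr ρ := by
  funext n; cases n <;> rfl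

theorem upsH_var : upsH (HVal.var : ℕ → HVal CV Op) = HVal.var := by
  funext n; cases n <;> rfl

mutual
theorem renV_renV (ρ' ρ : ℕ → ℕ) : ∀ V : HVal CV Op, renV ρ' (renV ρ V) = renV (ρ' ∘ ρ) V
  | .cv _ | .num _ _ | .var _ => rfl
  | .lam C => by simp only [renV, renC_renC, upr_comp]
  | .fixv V => by simp only [renV, renV_renV, upr_comp]
theorem renC_renC (ρ' ρ : ℕ → ℕ) : ∀ C : HComp CV Op, renC ρ' (renC ρ C) = renC (ρ' ∘ ρ) C
  | .app V W => by simp only [renC, renV_renV]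
  | .ret V => by simp only [renC, renV_renV]
  | .letin C B => by simp only [renC, renC_renC, upr_comp]
  | .opc σ V C => by simp only [renC, renV_renV, renC_renC, upr_comp]
  | .case k V Cs => by simp only [renC, renV_renV, renC_renC]
  | .handle Cr Hop C => by simp only [renC, renC_renC, upr_comp]
end

mutual
theorem subV_renV (s : ℕ → HVal CV Op) (ρ : ℕ → ℕ) :
    ∀ V : HVal CV Op, subV s (renV ρ V) = subV (s ∘ ρ) V
  | .cv _ | .num _ _ | .var _ => rfl
  | .lam C => by simp only [renV, subV, subC_renC, upsH_comp_upr]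
  | .fixv V => by simp only [renV, subV, subV_renV, upsH_comp_upr]
theorem subC_renC (s : ℕ → HVal CV Op) (ρ : ℕ → ℕ) :
    ∀ C : HComp CV Op, subC s (renC ρ C) = subC (s ∘ ρ) C
  | .app V W => by simp only [renC, subC, subV_renV]
  | .ret V => by simp only [renC, subC, subV_renV]
  | .letin C B => by simp only [renC, subC, subC_renC, upsH_comp_upr]
  | .opc σ V C => by simp only [renC, subC, subV_renV, subC_renC, upsH_comp_upr]
  | .case k V Cs => by simp only [renC, subC, subV_renV, subC_renC]
  | .handle Cr Hop C => by simp only [renC, subC, subC_renC, upsH_comp_upr]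
end

theorem renV_upr_succ (ρ : ℕ → ℕ) (V : HVal CV Op) :
    renV (upr ρ) (renV Nat.succ V) = renV Nat.succ (renV ρ V) := by
  rw [renV_renV, renV_renV]; rfl

theorem upsH_renV_comp (ρ : ℕ → ℕ) (s : ℕ → HVal CV Op) :
    upsH (renV ρ ∘ s) = renV (upr ρ) ∘ upsH s := by
  funext n
  cases n with
  | zero => rfl
  | succ n => exact (renV_upr_succ ρ (s n)).symm

mutual
theorem renV_subV (ρ : ℕ → ℕ) (s : ℕ → HVal CV Op) :
    ∀ V : HVal CV Op, renV ρ (subV s V) = subV (renV ρ ∘ s) V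
  | .cv _ | .num _ _ | .var _ => rfl
  | .lam C => by simp only [renV, subV, renC_subC, upsH_renV_comp]
  | .fixv V => by simp only [renV, subV, renV_subV, upsH_renV_comp]
theorem renC_subC (ρ : ℕ → ℕ) (s : ℕ → HVal CV Op) :
    ∀ C : HComp CV Op, renC ρ (subC s C) = subC (renV ρ ∘ s) C
  | .app V W => by simp only [renC, subC, renV_subV]
  | .ret V => by simp only [renC, subC, renV_subV]
  | .letin C B => by simp only [renC, subC, renC_subC, upsH_renV_comp]
  | .opc σ V C => by simp only [renC, subC, renV_subV, renC_subC, upsH_renV_comp]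
  | .case k V Cs => by simp only [renC, subC, renV_subV, renC_subC]
  | .handle Cr Hop C => by simp only [renC, subC, renC_subC, upsH_renV_comp]
end

mutual
theorem subV_var : ∀ V : HVal CV Op, subV .var V = V
  | .cv _ | .num _ _ | .var _ => rfl
  | .lam C => by simp only [subV, upsH_var, subC_var]
  | .fixv V => by simp only [subV, upsH_var, subV_var]
theorem subC_var : ∀ C : HComp CV Op, subC .var C = C
  | .app V W => by simp only [subC, subV_var]
  | .ret V => by simp only [subC, subV_var]
  | .letin C B => by simp only [subC, upsH_var, subC_var]
  | .opc σ V C => by simp only [subC, upsH_var, subV_var, subC_var]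
  | .case k V Cs => by simp only [subC, subV_var, subC_var]
  | .handle Cr Hop C => by simp only [subC, upsH_var, subC_var]
end

theorem subV_upsH_succ (s : ℕ → HVal CV Op) (V : HVal CV Op) :
    subV (upsH s) (renV Nat.succ V) = renV Nat.succ (subV s V) := by
  rw [subV_renV, renV_subV]; rfl

theorem subC_upsH_succ (s : ℕ → HVal CV Op) (C : HComp CV Op) :
    subC (upsH s) (renC Nat.succ C) = renC Nat.succ (subC s C) := by
  rw [subC_renC, renC_subC]; rfl

theorem subst0C_succ (W : HVal CV Op) (C : HComp CV Op) : subst0C W (renC Nat.succ C) = C := by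
  rw [subst0C, subC_renC]; exact subC_var C

theorem subC_sub2_succ_succ (A B : HVal CV Op) (C : HComp CV Op) :
    subC (sub2 A B) (renC Nat.succ (renC Nat.succ C)) = C := by
  rw [subC_renC, subC_renC]; exact subC_var C

/-- Closed values, as the values fixed by every substitution. -/
structure Closed (V : HVal CV Op) : Prop where
  sub (s : ℕ → HVal CV Op) : subV s V = V

theorem Closed.ren {V : HVal CV Op} (hV : Closed V) (ρ : ℕ → ℕ) : renV ρ V = V := by
  rw [← subV_var (renV ρ V), subV_renV, hV.sub]

end Substitution

/-! ### Weakening -/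

section Weakening

variable {BV CV Op : Type} {cvTy : CV → BV} {opPar : Op → BV} {opAr : Op → ℕ}

theorem getElem?_upr {α : Type*} {Γ Δ : List α} {ρ : ℕ → ℕ}
    (hρ : ∀ n T, Γ[n]? = some T → Δ[ρ n]? = some T) (U : α) :
    ∀ n T, (U :: Γ)[n]? = some T → (U :: Δ)[upr ρ n]? = some T
  | 0, _, h => h
  | n + 1, T, h => hρ n T h

mutual
theorem HVTy.rename {Γ Δ : List (HTy BV Op)} {ρ : ℕ → ℕ}
    (hρ : ∀ n T, Γ[n]? = some T → Δ[ρ n]? = some T) {V : HVal CV Op} {T : HTy BV Op} :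
    HVTy cvTy opPar opAr Γ V T → HVTy cvTy opPar opAr Δ (renV ρ V) T
  | .cv v => .cv v
  | .num h => .num h
  | .var h => .var (hρ _ _ h)
  | .lam h => .lam (h.rename (getElem?_upr hρ _))
  | .fixv h => .fixv (h.rename (getElem?_upr hρ _))
theorem HCTy.rename {Γ Δ : List (HTy BV Op)} {ρ : ℕ → ℕ}
    (hρ : ∀ n T, Γ[n]? = some T → Δ[ρ n]? = some T) {E : Set Op} {C : HComp CV Op}
    {T : HTy BV Op} :
    HCTy cvTy opPar opAr Γ E C T → HCTy cvTy opPar opAr Δ E (renC ρ C) T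
  | .app hV hW => .app (hV.rename hρ) (hW.rename hρ)
  | .ret hV => .ret (hV.rename hρ)
  | .letin hC hB => .letin (hC.rename hρ) (hB.rename (getElem?_upr hρ _))
  | .opc hσ hV hC => .opc hσ (hV.rename hρ) (hC.rename (getElem?_upr hρ _))
  | .case hV hCs => .case (hV.rename hρ) fun i => (hCs i).rename hρ
  | .handle hC hCr hHop =>
    .handle (hC.rename hρ) (hCr.rename (getElem?_upr hρ _)) fun σ hσ =>
      (hHop σ hσ).rename (getElem?_upr (getElem?_upr hρ _) _)
end

theorem HVTy.weaken {Γ : List (HTy BV Op)} {V : HVal CV Op} {T : HTy BV Op}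
    (h : HVTy cvTy opPar opAr Γ V T) (U : HTy BV Op) :
    HVTy cvTy opPar opAr (U :: Γ) (renV Nat.succ V) T :=
  h.rename (ρ := Nat.succ) (Δ := U :: Γ) fun _ _ h => h

theorem HCTy.weaken {Γ : List (HTy BV Op)} {E : Set Op} {C : HComp CV Op} {T : HTy BV Op}
    (h : HCTy cvTy opPar opAr Γ E C T) (U : HTy BV Op) :
    HCTy cvTy opPar opAr (U :: Γ) E (renC Nat.succ C) T :=
  h.rename (ρ := Nat.succ) (Δ := U :: Γ) fun _ _ h => h

end Weakening

/-! ### Reduction -/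

/-- Reduction in any number of steps. -/
abbrev Reduces {CV Op : Type} (C D : HComp CV Op) : Prop := ReflTransGen HStep C D

section Reduction

variable {CV Op : Type}

theorem not_hStep_ret (V : HVal CV Op) (D : HComp CV Op) : ¬ HStep (.ret V) D := nofun

theorem not_hStep_opc (σ : Op) (V : HVal CV Op) (C D : HComp CV Op) :
    ¬ HStep (.opc σ V C) D := nofun

theorem HStep.deterministic {C D D' : HComp CV Op} (h : HStep C D) (h' : HStep C D') :
    D = D' := by
  induction h generalizing D' with
  | beta | fix | case => cases h'; rfl
  | letRet | letOp =>
    cases h' with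
    | letCong _ h => cases h
    | _ => rfl
  | hRet | hOp =>
    cases h' with
    | hCong _ _ h => cases h
    | _ => rfl
  | letCong B h ih =>
    cases h' with
    | letCong _ h' => rw [ih h']
    | letRet | letOp => cases h
  | hCong Cr Hop h ih =>
    cases h' with
    | hCong _ _ h' => rw [ih h']
    | hRet | hOp => cases h

open scoped Classical in
/-- The one-step reduction relation as a partial function, so that the theory of
`StateTransition` applies to it. -/
noncomputable def nextStep (C : HComp CV Op) : Option (HComp CV Op) :=
  if h : ∃ D, HStep C D then some h.choose else none

theorem mem_nextStep {C D : HComp CV Op} : D ∈ nextStep C ↔ HStep C D := by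
  unfold nextStep
  split_ifs with h
  · rw [Option.mem_some_iff]
    exact ⟨fun e => e ▸ h.choose_spec, h.choose_spec.deterministic⟩
  · exact ⟨nofun, fun hD => (h ⟨D, hD⟩).elim⟩

theorem nextStep_eq_none {C : HComp CV Op} : nextStep C = none ↔ ∀ D, ¬ HStep C D := by
  simp only [Option.eq_none_iff_forall_not_mem, mem_nextStep]

theorem reaches_nextStep {C D : HComp CV Op} :
    StateTransition.Reaches nextStep C D ↔ Reduces C D := by
  simp only [StateTransition.Reaches, mem_nextStep]

theorem reaches₁_nextStep {C D : HComp CV Op} :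
    StateTransition.Reaches₁ nextStep C D ↔ TransGen HStep C D := by
  simp only [StateTransition.Reaches₁, mem_nextStep]

theorem mem_eval_nextStep {C D : HComp CV Op} :
    D ∈ StateTransition.eval nextStep C ↔ Reduces C D ∧ ∀ D', ¬ HStep D D' := by
  rw [StateTransition.mem_eval, reaches_nextStep, nextStep_eq_none]

theorem ret_mem_eval_nextStep {C : HComp CV Op} {V : HVal CV Op} :
    .ret V ∈ StateTransition.eval nextStep C ↔ Reduces C (.ret V) :=
  mem_eval_nextStep.trans (and_iff_left (not_hStep_ret V))

theorem reduces_ret_iff_of_reduces {C D : HComp CV Op} {V : HVal CV Op} (h : Reduces C D) :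
    Reduces C (.ret V) ↔ Reduces D (.ret V) := by
  rw [← ret_mem_eval_nextStep, StateTransition.reaches_eval (reaches_nextStep.2 h),
    ret_mem_eval_nextStep]

theorem normalForm_unique {C D D' : HComp CV Op} (hD : Reduces C D) (hD' : Reduces C D')
    (nD : ∀ N, ¬ HStep D N) (nD' : ∀ N, ¬ HStep D' N) : D = D' :=
  Part.mem_unique (mem_eval_nextStep.2 ⟨hD, nD⟩) (mem_eval_nextStep.2 ⟨hD', nD'⟩)

/-- The stack of evaluation frames `let _ = [·] in B`, for `B` in `Bs`, innermost first, applied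
to `M`. -/
def plug (Bs : List (HComp CV Op)) (M : HComp CV Op) : HComp CV Op := Bs.foldl .letin M

theorem HStep.plug (Bs : List (HComp CV Op)) {M N : HComp CV Op} (h : HStep M N) :
    HStep (plug Bs M) (plug Bs N) := by
  induction Bs generalizing M N with
  | nil => exact h
  | cons B _ ih => exact ih (.letCong B h)

theorem plug_reduces (Bs : List (HComp CV Op)) {M N : HComp CV Op} (h : Reduces M N) :
    Reduces (plug Bs M) (plug Bs N) :=
  h.lift (plug Bs) fun _ _ => HStep.plug Bs

theorem app_lam_reduces {C D : HComp CV Op} {W : HVal CV Op}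
    (h : subst0C W C = D) : Reduces (.app (.lam C) W) D :=
  h ▸ .single (.beta C W)

theorem letin_reduces {M : HComp CV Op} {V : HVal CV Op} (h : Reduces M (.ret V))
    (B : HComp CV Op) :
    Reduces (.letin M B) (subst0C V B) :=
  (plug_reduces [B] h).tail (.letRet V B)

theorem handle_reduces {M N : HComp CV Op} (Cr : HComp CV Op) (Hop : Op → HComp CV Op)
    (h : Reduces M N) : Reduces (.handle Cr Hop M) (.handle Cr Hop N) :=
  h.lift (HComp.handle Cr Hop) fun _ _ => HStep.hCong Cr Hop

/-- Run the thunk `a`, a function on the one-element type. -/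
def force (a : HVal CV Op) : HComp CV Op := .app a (.num 0 1)

/-- Run `M` if the thunk `a` returns without performing an operation, and `N` if it performs
one. -/
def ifPure (a : HVal CV Op) (M N : HComp CV Op) : HComp CV Op :=
  .handle (renC Nat.succ M) (fun _ => renC Nat.succ (renC Nat.succ N)) (force a)

theorem subC_ifPure (s : ℕ → HVal CV Op) (a : HVal CV Op) (M N : HComp CV Op) :
    subC s (ifPure a M N) = ifPure (subV s a) (subC s M) (subC s N) := by
  simp only [ifPure, force, subC, subV, subC_upsH_succ]

theorem ifPure_reduces_of_ret {a V : HVal CV Op} (h : Reduces (force a) (.ret V))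
    (M N : HComp CV Op) :
    Reduces (ifPure a M N) M := by
  have hstep := (handle_reduces (renC Nat.succ M) (fun _ => renC Nat.succ (renC Nat.succ N)) h).tail
    (.hRet _ _ _)
  rwa [subst0C_succ] at hstep

theorem ifPure_reduces_of_opc {a V : HVal CV Op} {σ : Op} {C : HComp CV Op}
    (h : Reduces (force a) (.opc σ V C)) (M N : HComp CV Op) : Reduces (ifPure a M N) N := by
  have hstep := (handle_reduces (renC Nat.succ M) (fun _ => renC Nat.succ (renC Nat.succ N)) h).tail
    (.hOp _ _ _ _ _)
  rwa [subC_sub2_succ_succ] at hstep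

end Reduction

/-- Values over the signature with the single operation `()` of arity `1`. -/
abbrev Val := HVal Unit Unit

/-- Computations over the signature with the single operation `()` of arity `1`. -/
abbrev Comp := HComp Unit Unit

/-! ### Numerals -/

/-- The computation `M` performs the operation exactly `n` times and then returns `()`. -/
inductive Performs : ℕ → Comp → Prop
  | ret {M} : Reduces M (.ret (.cv ())) → Performs 0 M
  | op {n M C} : Reduces M (.opc () (.cv ()) C) → Performs n (subst0C (.num 0 1) C) →
      Performs (n + 1) M

theorem Performs.of_reduces {n : ℕ} {M N : Comp} (h : Reduces M N) : Performs n N → Performs n M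
  | .ret h' => .ret (h.trans h')
  | .op h' hC => .op (h.trans h') hC

/-- The closed value `V` is a numeral for `n`: a thunk performing the operation `n` times. -/
structure IsNumeral (n : ℕ) (V : Val) : Prop where
  closed : Closed V
  performs : Performs n (force V)

theorem IsNumeral.ifPure_reduces {n : ℕ} {V : Val} (h : IsNumeral n V) (M N : Comp) :
    Reduces (ifPure V M N) (if n = 0 then M else N) := by
  cases h.performs with
  | ret h => exact ifPure_reduces_of_ret h M N
  | op h _ => exact ifPure_reduces_of_opc h M N

/-- The numeral `0`. -/
def zeroV : Val := .lam (.ret (.cv ()))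

/-- The successor of the numeral `a`. -/
def succV (a : Val) : Val :=
  .lam (.opc () (.cv ()) (force (renV Nat.succ (renV Nat.succ a))))

theorem closed_zeroV : Closed zeroV := ⟨fun _ => rfl⟩

theorem app_zeroV_reduces (W : Val) : Reduces (.app zeroV W) (.ret (.cv ())) := app_lam_reduces rfl

theorem isNumeral_zeroV : IsNumeral 0 zeroV := ⟨closed_zeroV, .ret (app_zeroV_reduces _)⟩

theorem subV_succV (s : ℕ → Val) (a : Val) : subV s (succV a) = succV (subV s a) := by
  simp only [succV, force, subV, subC, subV_upsH_succ]

theorem Closed.succV {a : Val} (ha : Closed a) : Closed (succV a) where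
  sub s := by rw [subV_succV, ha.sub]

theorem IsNumeral.succV {n : ℕ} {a : Val} (ha : IsNumeral n a) : IsNumeral (n + 1) (succV a) where
  closed := ha.closed.succV
  performs := by
    refine .op (C := force a) (app_lam_reduces ?_) ?_
    · simp only [subst0C, force, subC, subV, ha.closed.ren, ha.closed.sub]
    · simpa only [subst0C, force, subC, subV, ha.closed.sub] using ha.performs

/-! ### Predecessor -/

/-- The function `k` codes the pair `(n, n - 1)` of Kleene's predecessor construction: `k 1`
performs `n` operations and `k 0` performs `n - 1`. -/
structure PredPair (n : ℕ) (k : Val) : Prop where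
  closed : Closed k
  performs_one : Performs n (.app k (succV zeroV))
  performs_zero : Performs (n - 1) (.app k zeroV)

theorem predPair_zero : PredPair 0 zeroV where
  closed := closed_zeroV
  performs_one := .ret (app_zeroV_reduces _)
  performs_zero := .ret (app_zeroV_reduces _)

/-- From the pair for `n`, the pair for `n + 1`. -/
def predPairSucc (k : Val) : Val :=
  .lam (ifPure (.var 0) (.app (renV Nat.succ k) (succV zeroV))
    (.opc () (.cv ()) (.app (renV Nat.succ (renV Nat.succ k)) (succV zeroV))))

theorem subV_predPairSucc (s : ℕ → Val) (k : Val) :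
    subV s (predPairSucc k) = predPairSucc (subV s k) := by
  simp only [predPairSucc, subV, subC, subC_ifPure, subV_upsH_succ, closed_zeroV.succV.sub, upsH]

theorem PredPair.succ {n : ℕ} {k : Val} (hk : PredPair n k) :
    PredPair (n + 1) (predPairSucc k) := by
  have app_reduces (W : Val) : Reduces (.app (predPairSucc k) W)
      (ifPure W (.app k (succV zeroV)) (.opc () (.cv ()) (.app k (succV zeroV)))) :=
    app_lam_reduces <| by
      simp only [subst0C, subC_ifPure, subC, subV, hk.closed.ren, hk.closed.sub,
        closed_zeroV.succV.sub]
  refine ⟨⟨fun s => by rw [subV_predPairSucc, hk.closed.sub]⟩, .op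
    ((app_reduces _).trans (isNumeral_zeroV.succV.ifPure_reduces _ _)) ?_,
    .of_reduces ((app_reduces _).trans (isNumeral_zeroV.ifPure_reduces _ _)) hk.performs_one⟩
  simpa only [subst0C, subC, hk.closed.sub, closed_zeroV.succV.sub] using hk.performs_one

/-- Handle `M` so as to return the `PredPair` of the number of operations it performs. -/
def predHandle (M : Comp) : Comp :=
  .handle (.ret zeroV) (fun _ => .letin (force (.var 0)) (.ret (predPairSucc (.var 0)))) M

theorem subC_predHandle (s : ℕ → Val) (M : Comp) :
    subC s (predHandle M) = predHandle (subC s M) := by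
  simp only [predHandle, force, subC, subV, closed_zeroV.sub, subV_predPairSucc, upsH]

theorem predHandle_reduces {n : ℕ} {M : Comp} (h : Performs n M) :
    ∃ k, Reduces (predHandle M) (.ret k) ∧ PredPair n k := by
  induction h with
  | ret h => exact ⟨zeroV, (handle_reduces _ _ h).tail (.hRet _ _ _), predPair_zero⟩
  | @op n M C h _ ih =>
    obtain ⟨k, hk, hpair⟩ := ih
    refine ⟨predPairSucc k, ?_, hpair.succ⟩
    have resume : Reduces (force (.lam (predHandle C))) (.ret k) :=
      (app_lam_reduces (subC_predHandle _ _)).trans hk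
    have result := letin_reduces resume (.ret (predPairSucc (.var 0)))
    rw [subst0C, subC, subV_predPairSucc] at result
    exact ((handle_reduces _ _ h).tail (.hOp _ _ _ _ _)).trans result

/-- The predecessor of the numeral `a`. -/
def predV (a : Val) : Val :=
  .lam (.letin (predHandle (force (renV Nat.succ a))) (.app (.var 0) zeroV))

theorem subV_predV (s : ℕ → Val) (a : Val) : subV s (predV a) = predV (subV s a) := by
  simp only [predV, force, subV, subC, subC_predHandle, subV_upsH_succ, closed_zeroV.sub, upsH]

theorem Closed.predV {a : Val} (ha : Closed a) : Closed (predV a) where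
  sub s := by rw [subV_predV, ha.sub]

theorem IsNumeral.predV {n : ℕ} {a : Val} (ha : IsNumeral n a) : IsNumeral (n - 1) (predV a) where
  closed := ha.closed.predV
  performs := by
    obtain ⟨k, hk, hpair⟩ := predHandle_reduces ha.performs
    refine .of_reduces ((app_lam_reduces ?_).trans (letin_reduces hk (.app (.var 0) zeroV)))
      hpair.performs_zero
    simp only [subst0C, force, subC, subC_predHandle, subV, ha.closed.ren, ha.closed.sub,
      closed_zeroV.sub, upsH]

/-! ### Streams -/

/-- The stream with head `a` and tail `b`; a stream is a function from numerals to numerals. -/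
def consV (a b : Val) : Val :=
  .lam (ifPure (.var 0) (.ret (renV Nat.succ a)) (.app (renV Nat.succ b) (predV (.var 0))))

/-- The tail of the stream `a`. -/
def tailV (a : Val) : Val := .lam (.app (renV Nat.succ a) (succV (.var 0)))

/-- The constantly zero stream. -/
def zerosV : Val := .lam (.ret zeroV)

theorem subV_consV (s : ℕ → Val) (a b : Val) :
    subV s (consV a b) = consV (subV s a) (subV s b) := by
  simp only [consV, subV, subC, subC_ifPure, subV_predV, subV_upsH_succ, upsH]

theorem subV_tailV (s : ℕ → Val) (a : Val) : subV s (tailV a) = tailV (subV s a) := by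
  simp only [tailV, subV, subC, subV_succV, subV_upsH_succ, upsH]

theorem closed_zerosV : Closed zerosV := ⟨fun _ => rfl⟩

/-- The closed value `V` is a stream listing `v` followed by zeros. -/
structure IsStream (v : List ℕ) (V : Val) : Prop where
  closed : Closed V
  app_reduces {n : ℕ} {W : Val} : IsNumeral n W →
    ∃ W', Reduces (.app V W) (.ret W') ∧ IsNumeral (v.getI n) W'

theorem IsStream.head {v : List ℕ} {V : Val} (hV : IsStream v V) :
    ∃ W, Reduces (.app V zeroV) (.ret W) ∧ IsNumeral v.headI W := by
  simpa only [List.getI_zero_eq_headI] using hV.app_reduces isNumeral_zeroV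

theorem isStream_zerosV : IsStream [] zerosV where
  closed := closed_zerosV
  app_reduces _ := ⟨zeroV, app_lam_reduces rfl, by rw [List.getI_nil]; exact isNumeral_zeroV⟩

theorem IsStream.tail {v : List ℕ} {V : Val} (hV : IsStream v V) :
    IsStream v.tail (tailV V) where
  closed := ⟨fun s => by rw [subV_tailV, hV.closed.sub]⟩
  app_reduces {n W} hW := by
    obtain ⟨W', hW', hnum⟩ := hV.app_reduces hW.succV
    refine ⟨W', (app_lam_reduces ?_).trans hW', ?_⟩
    · simp only [subst0C, subC, subV_succV, subV, hV.closed.ren, hV.closed.sub]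
    · cases v <;> exact hnum

theorem IsStream.cons {n : ℕ} {v : List ℕ} {U V : Val} (hU : IsNumeral n U) (hV : IsStream v V) :
    IsStream (n :: v) (consV U V) where
  closed := ⟨fun s => by rw [subV_consV, hU.closed.sub, hV.closed.sub]⟩
  app_reduces {m W} hW := by
    have reduces : Reduces (.app (consV U V) W) (if m = 0 then .ret U else .app V (predV W)) := by
      refine (app_lam_reduces ?_).trans (hW.ifPure_reduces _ _)
      simp only [subst0C, subC_ifPure, subC, subV_predV, subV, hU.closed.ren, hU.closed.sub,
        hV.closed.ren, hV.closed.sub]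
    cases m with
    | zero => exact ⟨U, reduces, hU⟩
    | succ m =>
      obtain ⟨W', hW', hnum⟩ := hV.app_reduces hW.predV
      exact ⟨W', reduces.trans hW', hnum⟩

/-! ### Compiling partial recursive codes -/

/-- The frame expecting the second component of a `Code.cons`, with `a` the first one: prepend
the head of `a`. -/
def headFrame (a : Val) : Comp := .letin (.app a zeroV) (.ret (consV (.var 0) (.var 1)))

/-- The frame expecting the first component of a `Code.cons`: run `F` on the input `a` next. -/
def consFrame (F a : Val) : Comp := .letin (.app F a) (headFrame (.var 1))

/-- The frame expecting the output of the body of the loop `a`: exit on head `0`, else iterate. -/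
def loopFrame (a : Val) : Comp :=
  .letin (.app (.var 0) zeroV) (ifPure (.var 0) (.ret (tailV (.var 1)))
    (.app (renV Nat.succ a) (tailV (.var 1))))

theorem subC_headFrame (s : ℕ → Val) (a : Val) :
    subC (upsH s) (headFrame a) = headFrame (subV (upsH s) a) := by
  simp only [headFrame, subC, subV, subV_consV, closed_zeroV.sub, upsH, renV]

theorem subC_consFrame (s : ℕ → Val) (F a : Val) :
    subC (upsH s) (consFrame F a) = consFrame (subV (upsH s) F) (subV (upsH s) a) := by
  simp only [consFrame, subC, subC_headFrame, subV, upsH, renV]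

theorem subC_loopFrame (s : ℕ → Val) (a : Val) :
    subC (upsH s) (loopFrame a) = loopFrame (subV (upsH s) a) := by
  simp only [loopFrame, subC, subC_ifPure, subV, subV_tailV, subV_upsH_succ, closed_zeroV.sub,
    upsH, renV]

/-- The compilation of a partial recursive code to a function from streams to streams. -/
def compile : Code → Val
  | .zero' => .lam (.ret (consV zeroV (.var 0)))
  | .succ => .lam (.letin (.app (.var 0) zeroV) (.ret (consV (succV (.var 0)) zerosV)))
  | .tail => .lam (.ret (tailV (.var 0)))
  | .cons f fs => .lam (.letin (.app (compile f) (.var 0)) (consFrame (compile fs) (.var 1)))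
  | .comp f g => .lam (.letin (.app (compile g) (.var 0)) (.app (compile f) (.var 0)))
  | .case f g => .lam (.letin (.app (.var 0) zeroV)
      (ifPure (.var 0) (.app (compile f) (tailV (.var 1)))
        (.app (compile g) (consV (predV (.var 0)) (tailV (.var 1))))))
  | .fix f => .fixv (.lam (.letin (.app (compile f) (.var 0)) (loopFrame (.var 2))))

theorem closed_compile (c : Code) : Closed (compile c) := by
  refine ⟨fun s => ?_⟩
  induction c generalizing s with
  | zero' | succ | tail =>
    simp only [compile, subV, subC, subV_consV, subV_succV, subV_tailV, closed_zeroV.sub,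
      closed_zerosV.sub, upsH]
  | cons f fs ihf ihfs =>
    simp only [compile, subV, subC, subC_consFrame, ihf, ihfs, upsH, renV]
  | comp f g ihf ihg => simp only [compile, subV, subC, ihf, ihg, upsH]
  | case f g ihf ihg =>
    simp only [compile, subV, subC, subC_ifPure, subV_consV, subV_predV, subV_tailV,
      closed_zeroV.sub, ihf, ihg, upsH, renV]
  | fix f ihf =>
    simp only [compile, subV, subC, subC_loopFrame, ihf, upsH, renV]

section Operational

variable {V W : Val} {v w : List ℕ}

theorem headFrame_reduces (hV : IsStream v V) (hW : IsStream w W) :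
    ∃ U, Reduces (subst0C W (headFrame V)) (.ret U) ∧ IsStream (v.headI :: w) U := by
  obtain ⟨A, hA, hnum⟩ := hV.head
  refine ⟨consV A W, ?_, .cons hnum hW⟩
  have := letin_reduces hA (.ret (consV (.var 0) W))
  simpa only [subst0C, headFrame, subC, subV, subV_consV, hV.closed.sub, hW.closed.sub,
    hW.closed.ren, closed_zeroV.sub, upsH] using this

theorem subst0C_consFrame {F : Val} (hF : Closed F) (hV : Closed V) (hW : Closed W) :
    subst0C W (consFrame F V) = .letin (.app F V) (headFrame W) := by
  simp only [subst0C, consFrame, headFrame, subC, subV, subV_consV, hF.sub, hV.sub, hW.ren,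
    closed_zeroV.sub, upsH, renV]

theorem loopFrame_reduces {F : Val} (hF : Closed F) (hV : IsStream v V) :
    Reduces (subst0C V (loopFrame F))
      (if v.headI = 0 then .ret (tailV V) else .app F (tailV V)) := by
  obtain ⟨A, hA, hnum⟩ := hV.head
  have test := letin_reduces hA
    (ifPure (.var 0) (.ret (tailV V)) (.app F (tailV V)))
  rw [subst0C, subC_ifPure] at test
  have result := test.trans (hnum.ifPure_reduces _ _)
  simpa only [subst0C, loopFrame, subC_ifPure, subC, subV, subV_tailV, hF.sub, hF.ren,
    hV.closed.sub, hV.closed.ren, closed_zeroV.sub, upsH] using result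

theorem compile_zero'_reduces (V : Val) :
    Reduces (.app (compile .zero') V) (.ret (consV zeroV V)) :=
  app_lam_reduces <| by simp only [subst0C, subC, subV_consV, subV, closed_zeroV.sub]

theorem compile_succ_reduces (hV : IsStream v V) :
    ∃ U, Reduces (.app (compile .succ) V) (.ret U) ∧ IsStream [v.headI.succ] U := by
  obtain ⟨A, hA, hnum⟩ := hV.head
  refine ⟨consV (succV A) zerosV, (app_lam_reduces ?_).trans ((letin_reduces hA
    (.ret (consV (succV (.var 0)) zerosV))).trans ?_), .cons hnum.succV isStream_zerosV⟩
  · simp only [subst0C, subC, subV, subV_consV, subV_succV, closed_zeroV.sub, closed_zerosV.sub,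
      upsH]
  · simp only [subst0C, subC, subV, subV_consV, subV_succV, closed_zerosV.sub]
    exact .refl

theorem compile_tail_reduces (V : Val) :
    Reduces (.app (compile .tail) V) (.ret (tailV V)) :=
  app_lam_reduces <| by simp only [subst0C, subC, subV_tailV, subV]

theorem compile_cons_reduces (f fs : Code) (hV : Closed V) :
    Reduces (.app (compile (.cons f fs)) V)
      (.letin (.app (compile f) V) (consFrame (compile fs) V)) :=
  app_lam_reduces <| by
    simp only [subst0C, subC, subC_consFrame, subV, (closed_compile _).sub, hV.ren, upsH]

theorem compile_comp_reduces (f g : Code) (V : Val) :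
    Reduces (.app (compile (.comp f g)) V)
      (.letin (.app (compile g) V) (.app (compile f) (.var 0))) :=
  app_lam_reduces <| by simp only [subst0C, subC, subV, (closed_compile _).sub, upsH]

theorem compile_fix_reduces (f : Code) (V : Val) :
    Reduces (.app (compile (.fix f)) V)
      (.letin (.app (compile f) V) (loopFrame (compile (.fix f)))) := by
  have hfix := closed_compile (.fix f)
  have body (F : Val) (hF : Closed F) : subC (upsH fun | 0 => F | n + 1 => .var n)
      (.letin (.app (compile f) (.var 0)) (loopFrame (.var 2))) =
        .letin (.app (compile f) (.var 0)) (loopFrame F) := by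
    simp only [subC, subC_loopFrame, subV, (closed_compile f).sub, hF.ren, upsH]
  refine .trans (.single (.fix _ _)) (app_lam_reduces ?_)
  refine (congrArg (subst0C V) (body _ hfix)).trans ?_
  simp only [subst0C, subC, subC_loopFrame, subV, (closed_compile f).sub, hfix.sub]

theorem compile_case_reduces (f g : Code) (hV : IsStream v V) :
    ∃ U, IsStream (v.headI.pred :: v.tail) U ∧ Reduces (.app (compile (.case f g)) V)
      (if v.headI = 0 then .app (compile f) (tailV V) else .app (compile g) U) := by
  obtain ⟨A, hA, hnum⟩ := hV.head
  refine ⟨consV (predV A) (tailV V), .cons hnum.predV hV.tail, ?_⟩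
  have test := letin_reduces hA (ifPure (.var 0) (.app (compile f) (tailV V))
    (.app (compile g) (consV (predV (.var 0)) (tailV V))))
  rw [subst0C, subC_ifPure] at test
  have result := test.trans (hnum.ifPure_reduces _ _)
  simp only [subC, subV, subV_consV, subV_predV, subV_tailV, (closed_compile _).sub,
    hV.closed.sub] at result
  refine (app_lam_reduces ?_).trans result
  simp only [subst0C, subC_ifPure, subC, subV, subV_consV, subV_predV, subV_tailV,
    (closed_compile _).sub, closed_zeroV.sub, hV.closed.ren, upsH]

end Operational

/-! ### Simulation -/

/-- The stack of frames `Bs` represents the continuation `k`, returning `()` at the bottom. -/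
inductive ContRep : Cont → List Comp → Prop
  | halt : ContRep .halt [.ret (.cv ())]
  | cons₁ {fs v V k Bs} : IsStream v V → ContRep k Bs →
      ContRep (.cons₁ fs v k) (consFrame (compile fs) V :: Bs)
  | cons₂ {v V k Bs} : IsStream v V → ContRep k Bs → ContRep (.cons₂ v k) (headFrame V :: Bs)
  | comp {f k Bs} : ContRep k Bs → ContRep (.comp f k) (.app (compile f) (.var 0) :: Bs)
  | fix {f k Bs} : ContRep k Bs → ContRep (.fix f k) (loopFrame (compile (.fix f)) :: Bs)

/-- The computation `C` represents a configuration of the abstract machine for codes. -/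
inductive CfgRep : Cfg → Comp → Prop
  | halt {v} : CfgRep (.halt v) (.ret (.cv ()))
  | ret {k Bs v V} : ContRep k Bs → IsStream v V → CfgRep (.ret k v) (plug Bs (.ret V))

theorem stepNormal_simulation (c : Code) {k : Cont} {Bs : List Comp} {v : List ℕ} {V : Val}
    (hk : ContRep k Bs) (hV : IsStream v V) :
    ∃ D, CfgRep (stepNormal c k v) D ∧ Reduces (plug Bs (.app (compile c) V)) D := by
  induction c generalizing k Bs v V with
  | zero' =>
    exact ⟨_, .ret hk (.cons isNumeral_zeroV hV), plug_reduces Bs (compile_zero'_reduces V)⟩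
  | succ =>
    obtain ⟨U, hU, hstream⟩ := compile_succ_reduces hV
    exact ⟨_, .ret hk hstream, plug_reduces Bs hU⟩
  | tail => exact ⟨_, .ret hk hV.tail, plug_reduces Bs (compile_tail_reduces V)⟩
  | cons f fs ihf =>
    obtain ⟨D, hD, h⟩ := ihf (.cons₁ (fs := fs) hV hk) hV
    exact ⟨D, hD, (plug_reduces Bs (compile_cons_reduces f fs hV.closed)).trans h⟩
  | comp f g _ ihg =>
    obtain ⟨D, hD, h⟩ := ihg (.comp (f := f) hk) hV
    exact ⟨D, hD, (plug_reduces Bs (compile_comp_reduces f g V)).trans h⟩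
  | case f g ihf ihg =>
    obtain ⟨U, hU, hcase⟩ := compile_case_reduces f g hV
    simp only [stepNormal]
    cases hv : v.headI with
    | zero =>
      rw [hv, if_pos rfl] at hcase
      obtain ⟨D, hD, h⟩ := ihf hk hV.tail
      exact ⟨D, hD, (plug_reduces Bs hcase).trans h⟩
    | succ n =>
      rw [hv] at hU
      rw [hv, if_neg n.succ_ne_zero] at hcase
      obtain ⟨D, hD, h⟩ := ihg hk hU
      exact ⟨D, hD, (plug_reduces Bs hcase).trans h⟩
  | fix f ihf =>
    obtain ⟨D, hD, h⟩ := ihf (.fix hk) hV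
    exact ⟨D, hD, (plug_reduces Bs (compile_fix_reduces f V)).trans h⟩

theorem stepRet_simulation {k : Cont} {Bs : List Comp} {v : List ℕ} {V : Val}
    (hk : ContRep k Bs) (hV : IsStream v V) :
    ∃ D, CfgRep (stepRet k v) D ∧ TransGen HStep (plug Bs (.ret V)) D := by
  induction hk generalizing v V with
  | halt => exact ⟨_, .halt, .single (.letRet V _)⟩
  | @cons₁ fs w W k Bs hW hk _ =>
    obtain ⟨D, hD, h⟩ := stepNormal_simulation fs (.cons₂ hV hk) hW
    refine ⟨D, hD, .head' (HStep.plug Bs (.letRet V _)) ?_⟩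
    rwa [subst0C_consFrame (closed_compile fs) hW.closed hV.closed]
  | @cons₂ w W k Bs hW _ ih =>
    obtain ⟨U, hU, hstream⟩ := headFrame_reduces hW hV
    obtain ⟨D, hD, h⟩ := ih hstream
    exact ⟨D, hD, .head (HStep.plug Bs (.letRet V _)) (h.trans_right (plug_reduces Bs hU))⟩
  | @comp f k Bs hk _ =>
    obtain ⟨D, hD, h⟩ := stepNormal_simulation f hk hV
    refine ⟨D, hD, .head' (HStep.plug Bs (.letRet V _)) ?_⟩
    rwa [subst0C, subC, (closed_compile f).sub]
  | @fix f k Bs hk ih =>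
    have step := HStep.plug Bs (.letRet V (loopFrame (compile (.fix f))))
    have loop := plug_reduces Bs (loopFrame_reduces (closed_compile (.fix f)) hV)
    rw [stepRet]
    split_ifs at loop ⊢ with hv
    · obtain ⟨D, hD, h⟩ := ih hV.tail
      exact ⟨D, hD, .head step (h.trans_right loop)⟩
    · obtain ⟨D, hD, h⟩ := stepNormal_simulation (.fix f) hk hV.tail
      exact ⟨D, hD, .head' step (loop.trans h)⟩

theorem respects_nextStep : StateTransition.Respects step nextStep CfgRep := by
  intro a C h
  cases h with
  | halt => exact nextStep_eq_none.2 (not_hStep_ret _)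
  | ret hk hV =>
    obtain ⟨D, hD, h⟩ := stepRet_simulation hk hV
    exact ⟨D, hD, reaches₁_nextStep.2 h⟩

theorem compile_reduces_iff (c : Code) {v : List ℕ} {V : Val} (hV : IsStream v V) :
    Reduces (.letin (.app (compile c) V) (.ret (.cv ()))) (.ret (.cv ())) ↔ (c.eval v).Dom := by
  obtain ⟨D, hD, h⟩ := stepNormal_simulation c .halt hV
  refine (reduces_ret_iff_of_reduces h).trans ?_
  rw [← ret_mem_eval_nextStep]
  constructor
  · intro hret
    obtain ⟨b, -, hb⟩ := StateTransition.tr_eval_rev respects_nextStep hD hret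
    rw [stepNormal_eval] at hb
    exact hb.1
  · intro hdom
    have hhalt : .halt ((c.eval v).get hdom) ∈
        StateTransition.eval step (stepNormal c .halt v) := by
      rw [stepNormal_eval]
      exact Part.mem_map _ (Part.get_mem hdom)
    obtain ⟨_, ⟨⟩, hret⟩ := StateTransition.tr_eval respects_nextStep hD hhalt
    exact hret

/-! ### Typing -/

/-- Value typing over the one-operation signature `cvTyU`, `opParU`, `opArU`. -/
abbrev ValTyping (Γ : List (HTy Unit Unit)) (V : Val) (T : HTy Unit Unit) : Prop :=
  HVTy cvTyU opParU opArU Γ V T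

/-- Computation typing over the one-operation signature, with effects in `E`. -/
abbrev CompTyping (Γ : List (HTy Unit Unit)) (E : Set Unit) (C : Comp) (T : HTy Unit Unit) :
    Prop :=
  HCTy cvTyU opParU opArU Γ E C T

/-- The type of numerals, which are thunks performing operations. -/
def natTy : HTy Unit Unit := .arr (.enum 1) Set.univ (.base ())

/-- The type of streams of numerals; reading a stream has effects in `E`. -/
def streamTy (E : Set Unit) : HTy Unit Unit := .arr natTy E natTy

section Typing

variable {Γ : List (HTy Unit Unit)} {E : Set Unit} {T : HTy Unit Unit} {a b k : Val} {M N : Comp}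

theorem HCTy.force (ha : ValTyping Γ a (.arr (.enum 1) E T)) : CompTyping Γ E (force a) T :=
  .app ha (.num Nat.zero_lt_one)

theorem HCTy.ifPure (ha : ValTyping Γ a natTy) (hM : CompTyping Γ E M T) (hN : CompTyping Γ E N T) :
    CompTyping Γ E (ifPure a M N) T :=
  .handle (.force ha) (hM.weaken _) fun _ _ => (hN.weaken _).weaken _

theorem HVTy.zeroV : ValTyping Γ zeroV (.arr T E (.base ())) := .lam (.ret (.cv ()))

theorem HVTy.succV (ha : ValTyping Γ a natTy) : ValTyping Γ (succV a) natTy :=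
  .lam (.opc trivial (.cv ()) (.force ((ha.weaken _).weaken _)))

theorem HVTy.predPairSucc (hk : ValTyping Γ k (.arr natTy Set.univ (.base ()))) :
    ValTyping Γ (predPairSucc k) (.arr natTy Set.univ (.base ())) :=
  .lam (.ifPure (.var rfl) (.app (hk.weaken _) (.succV .zeroV))
    (.opc trivial (.cv ()) (.app ((hk.weaken _).weaken _) (.succV .zeroV))))

theorem HCTy.predHandle (hM : CompTyping Γ Set.univ M (.base ())) :
    CompTyping Γ E (predHandle M) (.arr natTy Set.univ (.base ())) :=
  .handle hM (.ret .zeroV) fun _ _ =>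
    .letin (.force (.var rfl)) (.ret (.predPairSucc (.var rfl)))

theorem HVTy.predV (ha : ValTyping Γ a natTy) : ValTyping Γ (predV a) natTy :=
  .lam (.letin (.predHandle (.force (ha.weaken _))) (.app (.var rfl) .zeroV))

theorem HVTy.consV (ha : ValTyping Γ a natTy) (hb : ValTyping Γ b (streamTy E)) :
    ValTyping Γ (consV a b) (streamTy E) :=
  .lam (.ifPure (.var rfl) (.ret (ha.weaken _)) (.app (hb.weaken _) (.predV (.var rfl))))

theorem HVTy.tailV (ha : ValTyping Γ a (streamTy E)) : ValTyping Γ (tailV a) (streamTy E) :=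
  .lam (.app (ha.weaken _) (.succV (.var rfl)))

theorem HVTy.zerosV : ValTyping Γ zerosV (streamTy E) := .lam (.ret .zeroV)

theorem HVTy.compile (c : Code) : ValTyping Γ (compile c) (.arr (streamTy E) E (streamTy E)) := by
  induction c generalizing Γ with
  | zero' => exact .lam (.ret (.consV .zeroV (.var rfl)))
  | succ => exact .lam (.letin (.app (.var rfl) .zeroV)
      (.ret (.consV (.succV (.var rfl)) .zerosV)))
  | tail => exact .lam (.ret (.tailV (.var rfl)))
  | cons f fs ihf ihfs =>
    exact .lam (.letin (.app ihf (.var rfl)) (.letin (.app ihfs (.var rfl))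
      (.letin (.app (.var rfl) .zeroV) (.ret (.consV (.var rfl) (.var rfl))))))
  | comp f g ihf ihg => exact .lam (.letin (.app ihg (.var rfl)) (.app ihf (.var rfl)))
  | case f g ihf ihg =>
    exact .lam (.letin (.app (.var rfl) .zeroV) (.ifPure (.var rfl)
      (.app ihf (.tailV (.var rfl)))
      (.app ihg (.consV (.predV (.var rfl)) (.tailV (.var rfl))))))
  | fix f ihf =>
    exact .fixv (.lam (.letin (.app ihf (.var rfl)) (.letin (.app (.var rfl) .zeroV)
      (.ifPure (.var rfl) (.ret (.tailV (.var rfl)))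
        (.app (.weaken (.var rfl) _) (.tailV (.var rfl)))))))

end Typing

/-! ### Halting computations -/

/-- The numeral for `n`. -/
def numeral : ℕ → Val
  | 0 => zeroV
  | n + 1 => succV (numeral n)

theorem isNumeral_numeral : ∀ n, IsNumeral n (numeral n)
  | 0 => isNumeral_zeroV
  | n + 1 => (isNumeral_numeral n).succV

theorem HVTy.numeral {Γ : List (HTy Unit Unit)} : ∀ n, ValTyping Γ (numeral n) natTy
  | 0 => .zeroV
  | n + 1 => .succV (.numeral n)

theorem primrec_encV_numeral : Primrec fun n => encV (numeral n) := by
  have hrec : Primrec (Nat.rec (motive := fun _ => ℕ) (encV zeroV) fun _ r =>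
      Nat.pair 3 (Nat.pair 8 (Nat.pair (encV (.cv ()))
        (Nat.pair 5 (Nat.pair r (encV (.num 0 1))))))) :=
    .nat_rec₁ _ (Primrec₂.natPair.comp (.const 3) (Primrec₂.natPair.comp (.const 8)
      (Primrec₂.natPair.comp (.const _) (Primrec₂.natPair.comp (.const 5)
        (Primrec₂.natPair.comp .snd (.const _)))))).to₂
  refine hrec.of_eq fun n => ?_
  induction n with
  | zero => rfl
  | succ n ih =>
    simp only [numeral, succV, force, (isNumeral_numeral n).closed.ren, encV, encC, ← ih]

/-- Run the compilation of `c` on the input `n`, returning `()` if it terminates. -/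
def runCode (c : Code) (n : ℕ) : Comp :=
  .app (.lam (.letin (.app (compile c) (consV (.var 0) zerosV)) (.ret (.cv ())))) (numeral n)

theorem HCTy.runCode (E : Set Unit) (c : Code) (n : ℕ) : CompTyping [] E (runCode c n) (.base ()) :=
  .app (.lam (.letin (.app (.compile c) (.consV (.var rfl) .zerosV)) (.ret (.cv ()))))
    (.numeral n)

theorem runCode_reduces_iff (c : Code) (n : ℕ) :
    Reduces (runCode c n) (.ret (.cv ())) ↔ (c.eval [n]).Dom := by
  have hinput : IsStream [n] (consV (numeral n) zerosV) :=
    .cons (isNumeral_numeral n) isStream_zerosV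
  rw [← compile_reduces_iff c hinput]
  refine reduces_ret_iff_of_reduces (app_lam_reduces ?_)
  simp only [subst0C, subC, subV, subV_consV, (closed_compile c).sub, closed_zerosV.sub]

theorem computable_encC_runCode (c : Code) : Computable fun n => encC (runCode c n) :=
  (Primrec₂.natPair.comp (.const 5)
    (Primrec₂.natPair.comp (.const _) primrec_encV_numeral)).to_comp

theorem exists_code_eval_dom_iff_halts :
    ∃ U : Code, ∀ c : Nat.Partrec.Code,
      (U.eval [Encodable.encode c]).Dom ↔ (Nat.Partrec.Code.eval c 0).Dom := by
  have hpart : Partrec fun n : ℕ => (Denumerable.ofNat Nat.Partrec.Code n).eval 0 :=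
    Nat.Partrec.Code.eval_part.comp (.ofNat _) (.const 0)
  obtain ⟨U, hU⟩ := Code.exists_code (Nat.Partrec'.part_iff₁.2 hpart)
  refine ⟨U, fun c => ?_⟩
  have eval_encode : U.eval [Encodable.encode c] = _ := hU (Encodable.encode c ::ᵥ .nil)
  rw [eval_encode]
  simp

/-! ### Effect trees and automata -/

theorem ETAt.eq_retl {CV Op : Type} {opAr : Op → ℕ} {C : HComp CV Op} {V : HVal CV Op}
    {l : Option (HLab CV Op)} (h : ETAt opAr C [] l) (hV : Reduces C (.ret V)) :
    l = some (.retl V) := by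
  cases h with
  | bot hdiv =>
    obtain ⟨D, hD⟩ := hdiv _ hV
    exact (not_hStep_ret V D hD).elim
  | retn hW => cases normalForm_unique hV hW (not_hStep_ret _) (not_hStep_ret _); rfl
  | opHead hop => cases normalForm_unique hV hop (not_hStep_ret _) (not_hStep_opc _ _ _)

theorem etAt_of_etf_eq_some {C : Comp} {p : List ℕ} {l : Option (HLab Unit Unit)}
    (h : ETF C p = some l) : ETAt opArU C p l := by
  unfold ETF at h
  split_ifs at h with hex
  exact Option.some.inj h ▸ hex.choose_spec

theorem etf_nil_eq_retl_iff {C : Comp} {V : Val} :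
    ETF C [] = some (some (.retl V)) ↔ Reduces C (.ret V) := by
  constructor
  · intro h
    cases etAt_of_etf_eq_some h with
    | retn hV => exact hV
  · intro hV
    have hex : ∃ l, ETAt opArU C [] l := ⟨_, .retn hV⟩
    rw [ETF, dif_pos hex, hex.choose_spec.eq_retl hV]

/-- The automaton accepting the trees whose root label has the code `n`. -/
def rootAutomaton (n : ℕ) : APTCode where
  qI := 0
  δ := [((0, n), .tt)]
  Ω := []

theorem accepts_rootAutomaton_iff {n : ℕ} {t : TreeF (HLab Unit Unit)} :
    APT.Accepts arH (rootAutomaton n).toAPT t ↔ ∃ l, t [] = some (some l) ∧ encLab l = n := by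
  have sat_iff (S : Set (ℕ × ℕ)) (l : HLab Unit Unit) :
      PBF.Sat S ((rootAutomaton n).toAPT.δ 0 l) ↔ encLab l = n := by
    have hkey : ((0, encLab l) == ((0, n) : ℕ × ℕ)) = decide (encLab l = n) := by
      rw [Bool.eq_iff_iff]; simp
    by_cases h : encLab l = n <;> simp [APTCode.toAPT, rootAutomaton, List.lookup, hkey, h, PBF.Sat]
  constructor
  · rintro ⟨R, ⟨hroot, hrun⟩, -⟩
    obtain ⟨l, S, ht, -, hsat, -⟩ := hrun [] hroot
    exact ⟨l, ht, (sat_iff S l).1 hsat⟩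
  · rintro ⟨l, ht, hl⟩
    refine ⟨{[]}, ⟨rfl, ?_⟩, fun b hb => ?_⟩
    · rintro _ rfl
      exact ⟨l, ∅, ht, nofun, (sat_iff ∅ l).2 hl, nofun⟩
    · exact (List.cons_ne_nil _ _ (hb 1)).elim

theorem encLab_eq_iff {l : HLab Unit Unit} :
    encLab l = encLab (.retl (.cv ())) ↔ l = .retl (.cv ()) := by
  rcases l with _ | _ | V
  · simp [encLab]
  · simp [encLab]
  · cases V <;> simp [encLab, encV]

theorem accepts_etf_iff {C : Comp} :
    APT.Accepts arH (rootAutomaton (encLab (.retl (.cv ())))).toAPT (ETF C) ↔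
      Reduces C (.ret (.cv ())) := by
  simp only [accepts_rootAutomaton_iff, encLab_eq_iff, exists_eq_right, etf_nil_eq_retl_iff]

end HEPCF

open HEPCF in
theorem hepcf_model_checking_undecidable_general :
    ∃ A : APTCode, ∀ E : Set Unit, ¬ ∃ f : ℕ → Bool, Computable f ∧
      ∀ C, HCTy cvTyU opParU opArU [] E C (.base ()) →
        (f (encC C) = true ↔ APT.Accepts arH A.toAPT (ETF C)) := by
  refine ⟨rootAutomaton (encLab (.retl (.cv ()))), fun E => ?_⟩
  rintro ⟨f, hf, hdecides⟩
  obtain ⟨U, hU⟩ := exists_code_eval_dom_iff_halts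
  have hhalts (c : Nat.Partrec.Code) :
      f (encC (runCode U (Encodable.encode c))) = true ↔ (c.eval 0).Dom := by
    rw [hdecides _ (.runCode E U _), accepts_etf_iff, runCode_reduces_iff, hU]
  exact ComputablePred.halting_problem 0 (ComputablePred.computable_iff.2
    ⟨_, hf.comp ((computable_encC_runCode U).comp .encode),
      funext fun c => propext (hhalts c).symm⟩)

open HEPCF in
/-- MSO (APT) model-checking of effect trees generated by closed HEPCF
computations is undecidable: no computable function, given (the codes of) a
closed well-typed HEPCF computation `C` and an alternating parity tree
automaton `A`, decides whether the effect tree of `C` is accepted by `A`. -/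
theorem hepcf_model_checking_undecidable :
    ¬ ∃ f : ℕ → Bool, Computable f ∧
      ∀ (C : HComp Unit Unit) (A : APTCode),
        HCTy cvTyU opParU opArU [] Set.univ C (.base ()) →
        (f (Nat.pair (encC C) (encAPT A)) = true ↔
          APT.Accepts arH A.toAPT (ETF C)) := by
  obtain ⟨A, hA⟩ := hepcf_model_checking_undecidable_general
  rintro ⟨f, hf, hdecides⟩
  exact hA Set.univ ⟨fun n => f (Nat.pair n (encAPT A)),
    hf.comp (Primrec₂.natPair.to_comp.comp .id (.const _)), fun C => hdecides C A⟩
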